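/- Let a_0(n), a_1(n) be bounded convergent sequences satisfying 2a_0(n) + a_1(n) = 1 and, for all n, either a_0(n) < 0 or a_1(n) + a_0(n) < 0, with limits l_0 = lim a_0(n) and l_1 = lim a_1(n). If f ∈ C[0,1] and f is twice differentiable at a point x ∈ [0,1], then lim_{n→∞} n(D_n^{M,1}(f; x) − f(x)) = (1 − 2x)(2l_1 + 3l_0) f′(x) + x(1 − x)(2l_0 + l_1) f″(x); moreover the convergence is uniform on [0,1] if f″ is continuous on [0,1]. -/

import Mathlib

open Filter Topology

/-- Bernstein basis polynomial `p_{n,k}(x)`, zero when `k < 0` or `k > n`. -/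
noncomputable def bern (n : ℕ) (k : ℤ) (x : ℝ) : ℝ :=
  if 0 ≤ k ∧ k ≤ (n : ℤ) then (n.choose k.toNat : ℝ) * x ^ k.toNat * (1 - x) ^ (n - k.toNat)
  else 0

/-- Modified Bernstein basis `p_{n,k}^{M,1}(x)` of Khosravian-Arab et al. -/
noncomputable def pM1 (a0 a1 : ℕ → ℝ) (n : ℕ) (k : ℤ) (x : ℝ) : ℝ :=
  (a1 n * x + a0 n) * bern (n - 1) k x + (a1 n * (1 - x) + a0 n) * bern (n - 1) (k - 1) x

/-- First-order modified Durrmeyer operator `D_n^{M,1}(f;x)`. -/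
noncomputable def DM1 (a0 a1 : ℕ → ℝ) (n : ℕ) (f : ℝ → ℝ) (x : ℝ) : ℝ :=
  ((n : ℝ) + 1) * ∑ k ∈ Finset.range (n + 1),
    pM1 a0 a1 n k x * ∫ t in (0:ℝ)..1, bern n k t * f t

/-!
Since the coefficients of the basis may be negative, the operators are not positive and the
classical Voronovskaja argument does not apply to them directly. With `n = m + 1`, however, their
kernel is `a(x, n) K_m(x, t) + a(1 - x, n) K_m(1 - x, 1 - t)` for a positive kernel `K_m`, and
`2 a_0(n) + a_1(n) = 1` forces `|a(x, n)| ≤ 1 + |a_0(n)|` on `[0, 1]`, so it is dominated by a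
bounded multiple of `K_m(x, t) + K_m(1 - x, 1 - t)`, which is positive and concentrates at `x` at
the same rate. The first two signed moments therefore produce the limit, while the second and
fourth moments of the majorant dispose of the Taylor remainder. The moments of `K_m` follow from
the factorial moments of the binomial distribution and Vandermonde's identity.
-/

section Voronovskaja

variable {ι : Type*} {l : Filter ι} {a b : ℝ} {s T T' : Set ℝ} {f f' f'' m₁ m₂ : ℝ → ℝ}
  {c : ι → ℝ} {K P : ι → ℝ → ℝ → ℝ}

theorem tendstoUniformlyOn_mul_left_of_norm_le {α R : Type*} [SeminormedRing R] {S : Set α}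
    {F : ι → α → R} {g h : α → R} {M : ℝ} (hF : TendstoUniformlyOn F g l S)
    (hh : ∀ x ∈ S, ‖h x‖ ≤ M) :
    TendstoUniformlyOn (fun i x => h x * F i x) (fun x => h x * g x) l S := by
  rw [Metric.tendstoUniformlyOn_iff] at hF ⊢
  intro ε hε
  have hM : 0 < |M| + 1 := by positivity
  filter_upwards [hF (ε / (|M| + 1)) (by positivity)] with i hi x hx
  calc dist (h x * g x) (h x * F i x)
      ≤ ‖h x‖ * dist (g x) (F i x) := by
        rw [dist_eq_norm, dist_eq_norm, ← mul_sub]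
        exact norm_mul_le _ _
    _ ≤ (|M| + 1) * dist (g x) (F i x) := by
        gcongr
        linarith [hh x hx, le_abs_self M]
    _ < ε := by
        rw [mul_comm]
        exact (lt_div_iff₀ hM).1 (hi x hx)

/-- The remainder of the second-order expansion of `f` at `x`, with `f'` and `f''` in the place of
the first two derivatives. -/
noncomputable def secondOrderRemainder (f f' f'' : ℝ → ℝ) (x t : ℝ) : ℝ :=
  f t - f x - f' x * (t - x) - f'' x / 2 * (t - x) ^ 2

/-- The second-order expansions of `f` at the points of `T` hold along `s` with the Peano remainder
`o((t - x) ^ 2)` uniform in the base point. -/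
def HasUniformSecondOrderExpansionOn (f f' f'' : ℝ → ℝ) (T s : Set ℝ) : Prop :=
  ∀ ε > 0, ∃ δ > 0, ∀ x ∈ T, ∀ t ∈ s, |t - x| < δ →
    |secondOrderRemainder f f' f'' x t| ≤ ε * (t - x) ^ 2

theorem HasUniformSecondOrderExpansionOn.exists_abs_secondOrderRemainder_le {F M : ℝ}
    (h : HasUniformSecondOrderExpansionOn f f' f'' T s) (hT : T ⊆ s)
    (hf : ∀ t ∈ s, |f t| ≤ F) (hf' : ∀ x ∈ T, |f' x| ≤ M) (hf'' : ∀ x ∈ T, |f'' x| ≤ M)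
    {ε : ℝ} (hε : 0 < ε) :
    ∃ C, ∀ x ∈ T, ∀ t ∈ s,
      |secondOrderRemainder f f' f'' x t| ≤ ε * (t - x) ^ 2 + C * (t - x) ^ 4 := by
  obtain ⟨δ, hδ, h_near⟩ := h ε hε
  refine ⟨|2 * F / δ ^ 4 + M / δ ^ 3 + M / (2 * δ ^ 2)|, fun x hx t ht => ?_⟩
  rcases lt_or_ge |t - x| δ with h_lt | h_ge
  · exact (h_near x hx t ht h_lt).trans (le_add_of_nonneg_right (by positivity))
  · have hF : 0 ≤ F := (abs_nonneg _).trans (hf t ht)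
    have hM : 0 ≤ M := (abs_nonneg _).trans (hf' x hx)
    set u := |t - x|
    have h_ratio : 1 ≤ u / δ := (one_le_div hδ).2 h_ge
    calc |secondOrderRemainder f f' f'' x t|
        ≤ |f t| + |f x| + |f' x * (t - x)| + |f'' x / 2 * (t - x) ^ 2| :=
          (abs_sub _ _).trans (add_le_add_left ((abs_sub _ _).trans
            (add_le_add_left (abs_sub _ _) _)) _)
      _ = |f t| + |f x| + |f' x| * u + |f'' x| / 2 * u ^ 2 := by
          rw [abs_mul, abs_mul, abs_div, abs_pow, abs_two]
      _ ≤ F + F + M * u + M / 2 * u ^ 2 := by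
          gcongr
          exacts [hf t ht, hf x (hT hx), hf' x hx, hf'' x hx]
      _ ≤ 2 * F * (u / δ) ^ 4 + M * u * (u / δ) ^ 3 + M / 2 * u ^ 2 * (u / δ) ^ 2 := by
          rw [← two_mul]
          exact add_le_add (add_le_add
            (le_mul_of_one_le_right (by positivity) (one_le_pow₀ h_ratio))
            (le_mul_of_one_le_right (by positivity) (one_le_pow₀ h_ratio)))
            (le_mul_of_one_le_right (by positivity) (one_le_pow₀ h_ratio))
      _ = (2 * F / δ ^ 4 + M / δ ^ 3 + M / (2 * δ ^ 2)) * u ^ 4 := by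
          field_simp
      _ ≤ _ := by
          rw [abs_of_nonneg (by positivity : 0 ≤ 2 * F / δ ^ 4 + M / δ ^ 3 + M / (2 * δ ^ 2)),
            Even.pow_abs ⟨2, rfl⟩]
          exact le_add_of_nonneg_left (by positivity)

theorem abs_integral_mul_le_of_abs_le {k p r q : ℝ → ℝ} (hab : a ≤ b)
    (hpq : IntervalIntegrable (fun t => p t * q t) MeasureTheory.volume a b)
    (hkp : ∀ t ∈ Set.Icc a b, |k t| ≤ p t) (hrq : ∀ t ∈ Set.Icc a b, |r t| ≤ q t) :
    |∫ t in a..b, k t * r t| ≤ ∫ t in a..b, p t * q t := by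
  rw [← Real.norm_eq_abs]
  refine intervalIntegral.norm_integral_le_of_norm_le hab (.of_forall fun t ht => ?_) hpq
  have ht := Set.Ioc_subset_Icc_self ht
  rw [norm_mul]
  exact mul_le_mul (hkp t ht) (hrq t ht) (norm_nonneg _) ((abs_nonneg _).trans (hkp t ht))

/-- Signed kernels `K i` on `[a, b]` of total mass one whose first two moments about `x ∈ T`, scaled
by `c i`, converge uniformly to `m₁ x` and `m₂ x`, and which are dominated by kernels `P i`
concentrating at `x` on the same scale. These are the properties of a kernel operator on which a
Voronovskaja theorem rests; `P` takes over the role played by the kernel itself when it is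
positive. -/
structure IsVoronovskajaKernel (l : Filter ι) (a b : ℝ) (T : Set ℝ) (c : ι → ℝ)
    (K P : ι → ℝ → ℝ → ℝ) (m₁ m₂ : ℝ → ℝ) : Prop where
  scale_nonneg : ∀ i, 0 ≤ c i
  continuousOn : ∀ i, ∀ x ∈ T, ContinuousOn (K i x) (Set.Icc a b)
  continuousOn_majorant : ∀ i, ∀ x ∈ T, ContinuousOn (P i x) (Set.Icc a b)
  abs_le : ∀ i, ∀ x ∈ T, ∀ t ∈ Set.Icc a b, |K i x t| ≤ P i x t
  integral_eq_one : ∀ i, ∀ x ∈ T, ∫ t in a..b, K i x t = 1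
  tendsto_moment_one :
    TendstoUniformlyOn (fun i x => c i * ∫ t in a..b, K i x t * (t - x)) m₁ l T
  tendsto_moment_two :
    TendstoUniformlyOn (fun i x => c i * ∫ t in a..b, K i x t * (t - x) ^ 2) m₂ l T
  bounded_majorant_moment_two :
    ∃ B, ∀ i, ∀ x ∈ T, c i * ∫ t in a..b, P i x t * (t - x) ^ 2 ≤ B
  tendsto_majorant_moment_four :
    TendstoUniformlyOn (fun i x => c i * ∫ t in a..b, P i x t * (t - x) ^ 4) 0 l T

namespace IsVoronovskajaKernel

theorem mono (h : IsVoronovskajaKernel l a b T c K P m₁ m₂) (hT : T' ⊆ T) :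
    IsVoronovskajaKernel l a b T' c K P m₁ m₂ where
  scale_nonneg := h.scale_nonneg
  continuousOn i x hx := h.continuousOn i x (hT hx)
  continuousOn_majorant i x hx := h.continuousOn_majorant i x (hT hx)
  abs_le i x hx := h.abs_le i x (hT hx)
  integral_eq_one i x hx := h.integral_eq_one i x (hT hx)
  tendsto_moment_one := h.tendsto_moment_one.mono hT
  tendsto_moment_two := h.tendsto_moment_two.mono hT
  bounded_majorant_moment_two :=
    h.bounded_majorant_moment_two.imp fun _ hB i x hx => hB i x (hT hx)
  tendsto_majorant_moment_four := h.tendsto_majorant_moment_four.mono hT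

theorem abs_integral_mul_le (h : IsVoronovskajaKernel l a b T c K P m₁ m₂) (hab : a ≤ b) (i : ι)
    {x ε C : ℝ} (hx : x ∈ T) {r : ℝ → ℝ}
    (hr : ∀ t ∈ Set.Icc a b, |r t| ≤ ε * (t - x) ^ 2 + C * (t - x) ^ 4) :
    |∫ t in a..b, K i x t * r t| ≤ ε * (∫ t in a..b, P i x t * (t - x) ^ 2)
      + C * ∫ t in a..b, P i x t * (t - x) ^ 4 := by
  have h_int (g : ℝ → ℝ) (hg : Continuous g) :
      IntervalIntegrable (fun t => P i x t * g t) MeasureTheory.volume a b :=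
    ((h.continuousOn_majorant i x hx).mul hg.continuousOn).intervalIntegrable_of_Icc hab
  refine (abs_integral_mul_le_of_abs_le hab (h_int _ (by fun_prop)) (h.abs_le i x hx)
    hr).trans_eq ?_
  simp only [mul_add, mul_left_comm (P i x _)]
  rw [intervalIntegral.integral_add ((h_int _ (by fun_prop)).const_mul _)
    ((h_int _ (by fun_prop)).const_mul _), intervalIntegral.integral_const_mul,
    intervalIntegral.integral_const_mul]

theorem tendstoUniformlyOn_remainder (h : IsVoronovskajaKernel l a b T c K P m₁ m₂) (hab : a ≤ b)
    {r : ℝ → ℝ → ℝ}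
    (hr : ∀ ε > 0, ∃ C, ∀ x ∈ T, ∀ t ∈ Set.Icc a b,
      |r x t| ≤ ε * (t - x) ^ 2 + C * (t - x) ^ 4) :
    TendstoUniformlyOn (fun i x => c i * ∫ t in a..b, K i x t * r x t) 0 l T := by
  obtain ⟨B, hB⟩ := h.bounded_majorant_moment_two
  rw [Metric.tendstoUniformlyOn_iff]
  intro ε hε
  obtain ⟨C, hC⟩ := hr (ε / (2 * (|B| + 1))) (by positivity)
  have h_four := Metric.tendstoUniformlyOn_iff.1 h.tendsto_majorant_moment_four
    (ε / (2 * (|C| + 1))) (by positivity)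
  filter_upwards [h_four] with i hi x hx
  set S₂ := ∫ t in a..b, P i x t * (t - x) ^ 2
  set S₄ := ∫ t in a..b, P i x t * (t - x) ^ 4
  have h_two : ε / (2 * (|B| + 1)) * (c i * S₂) < ε / 2 := by
    calc ε / (2 * (|B| + 1)) * (c i * S₂) < ε / (2 * (|B| + 1)) * (|B| + 1) := by
          gcongr
          linarith [hB i x hx, le_abs_self B]
      _ = ε / 2 := by field_simp
  have h_four : C * (c i * S₄) ≤ ε / 2 := by
    have h_abs : |c i * S₄| < ε / (2 * (|C| + 1)) := by simpa using hi x hx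
    calc C * (c i * S₄) ≤ |C| * |c i * S₄| := (le_abs_self _).trans_eq (abs_mul _ _)
      _ ≤ (|C| + 1) * (ε / (2 * (|C| + 1))) := by
          gcongr
          linarith
      _ = ε / 2 := by field_simp
  rw [Pi.zero_apply, dist_zero_left, norm_mul, Real.norm_of_nonneg (h.scale_nonneg i)]
  calc c i * ‖∫ t in a..b, K i x t * r x t‖
      ≤ c i * (ε / (2 * (|B| + 1)) * S₂ + C * S₄) :=
        mul_le_mul_of_nonneg_left (h.abs_integral_mul_le hab i hx (hC x hx)) (h.scale_nonneg i)
    _ = ε / (2 * (|B| + 1)) * (c i * S₂) + C * (c i * S₄) := by ring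
    _ < ε := by linarith

theorem integral_mul_sub_eq (h : IsVoronovskajaKernel l a b T c K P m₁ m₂) (hab : a ≤ b)
    (hf : IntervalIntegrable f MeasureTheory.volume a b) (f' f'' : ℝ → ℝ) (i : ι) {x : ℝ}
    (hx : x ∈ T) :
    (∫ t in a..b, K i x t * f t) - f x
      = f' x * (∫ t in a..b, K i x t * (t - x))
        + f'' x / 2 * (∫ t in a..b, K i x t * (t - x) ^ 2)
        + ∫ t in a..b, K i x t * secondOrderRemainder f f' f'' x t := by
  have hK := h.continuousOn i x hx
  have h_int (g : ℝ → ℝ) (hg : IntervalIntegrable g MeasureTheory.volume a b) :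
      IntervalIntegrable (fun t => K i x t * g t) MeasureTheory.volume a b :=
    hg.continuousOn_mul (by rwa [Set.uIcc_of_le hab])
  have h_one := h_int (fun t => t - x) (Continuous.intervalIntegrable (by fun_prop) _ _)
  have h_two := h_int (fun t => (t - x) ^ 2) (Continuous.intervalIntegrable (by fun_prop) _ _)
  have h_zero : IntervalIntegrable (K i x) MeasureTheory.volume a b :=
    hK.intervalIntegrable_of_Icc hab
  have h_rem : (fun t => K i x t * secondOrderRemainder f f' f'' x t)
      = fun t => K i x t * f t - f x * K i x t - f' x * (K i x t * (t - x))
        - f'' x / 2 * (K i x t * (t - x) ^ 2) := by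
    ext t
    rw [secondOrderRemainder]
    ring
  rw [h_rem, intervalIntegral.integral_sub (((h_int f hf).sub (h_zero.const_mul _)).sub
      (h_one.const_mul _)) (h_two.const_mul _),
    intervalIntegral.integral_sub ((h_int f hf).sub (h_zero.const_mul _)) (h_one.const_mul _),
    intervalIntegral.integral_sub (h_int f hf) (h_zero.const_mul _)]
  simp only [intervalIntegral.integral_const_mul, h.integral_eq_one i x hx]
  ring

theorem tendstoUniformlyOn_voronovskaja {F M : ℝ} (h : IsVoronovskajaKernel l a b T c K P m₁ m₂)
    (hab : a ≤ b) (hT : T ⊆ Set.Icc a b) (hf : IntervalIntegrable f MeasureTheory.volume a b)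
    (hF : ∀ t ∈ Set.Icc a b, |f t| ≤ F) (hf' : ∀ x ∈ T, |f' x| ≤ M) (hf'' : ∀ x ∈ T, |f'' x| ≤ M)
    (h_exp : HasUniformSecondOrderExpansionOn f f' f'' T (Set.Icc a b)) :
    TendstoUniformlyOn (fun i x => c i * ((∫ t in a..b, K i x t * f t) - f x))
      (fun x => f' x * m₁ x + f'' x / 2 * m₂ x) l T := by
  have h_half : ∀ x ∈ T, |f'' x / 2| ≤ M := fun x hx => by
    rw [abs_div, abs_two]
    linarith [hf'' x hx, abs_nonneg (f'' x)]
  have h_rem := h.tendstoUniformlyOn_remainder hab fun ε hε =>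
    h_exp.exists_abs_secondOrderRemainder_le hT hF hf' hf'' hε
  have h_sum := ((tendstoUniformlyOn_mul_left_of_norm_le h.tendsto_moment_one hf').add
    (tendstoUniformlyOn_mul_left_of_norm_le h.tendsto_moment_two h_half)).add h_rem
  refine (h_sum.congr (.of_forall fun i x hx => ?_)).congr_right fun x _ => add_zero _
  simp only [Pi.add_apply, h.integral_mul_sub_eq hab hf f' f'' i hx]
  ring

end IsVoronovskajaKernel

end Voronovskaja

section TaylorExpansion

variable {s : Set ℝ} {f f' f'' : ℝ → ℝ} {x t C : ℝ}

theorem abs_sub_sub_mul_le_of_abs_deriv_sub_le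
    (hf : ∀ y ∈ Set.uIcc x t, HasDerivWithinAt f (f' y) (Set.uIcc x t) y)
    (h_bound : ∀ y ∈ Set.uIcc x t, |f' y - f' x| ≤ C) :
    |f t - f x - f' x * (t - x)| ≤ C * |t - x| := by
  have h := (convex_uIcc x t).norm_image_sub_le_of_norm_hasDerivWithin_le
    (fun y hy => (hf y hy).sub ((hasDerivWithinAt_id y _).const_mul (f' x)))
    (fun y hy => by simpa using h_bound y hy) Set.left_mem_uIcc Set.right_mem_uIcc
  calc |f t - f x - f' x * (t - x)| = |f t - f' x * t - (f x - f' x * x)| := by ring_nf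
    _ ≤ C * |t - x| := h

theorem abs_secondOrderRemainder_le_of_abs_deriv_sub_sub_le
    (hf : ∀ y ∈ Set.uIcc x t, HasDerivWithinAt f (f' y) (Set.uIcc x t) y)
    (h_bound : ∀ y ∈ Set.uIcc x t, |f' y - f' x - f'' x * (y - x)| ≤ C * |y - x|) :
    |secondOrderRemainder f f' f'' x t| ≤ C * (t - x) ^ 2 := by
  rcases eq_or_ne x t with rfl | hxt
  · simp [secondOrderRemainder]
  have hC : 0 ≤ C := nonneg_of_mul_nonneg_left
    ((abs_nonneg _).trans (h_bound t Set.right_mem_uIcc)) (abs_pos.2 (sub_ne_zero.2 hxt.symm))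
  have h_deriv (y : ℝ) (hy : y ∈ Set.uIcc x t) :
      HasDerivWithinAt (fun y => f y - f'' x / 2 * (y - x) ^ 2) (f' y - f'' x * (y - x))
        (Set.uIcc x t) y := by
    refine ((hf y hy).sub ((((hasDerivWithinAt_id y _).sub_const x).pow 2).const_mul
      (f'' x / 2))).congr_deriv ?_
    simp only [id_eq, Nat.cast_ofNat]
    ring
  have h := abs_sub_sub_mul_le_of_abs_deriv_sub_le (C := C * |t - x|) h_deriv fun y hy => by
    calc |f' y - f'' x * (y - x) - (f' x - f'' x * (x - x))|
        = |f' y - f' x - f'' x * (y - x)| := by ring_nf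
      _ ≤ C * |y - x| := h_bound y hy
      _ ≤ C * |t - x| := mul_le_mul_of_nonneg_left (Set.abs_sub_left_of_mem_uIcc hy) hC
  calc |secondOrderRemainder f f' f'' x t|
      = |f t - f'' x / 2 * (t - x) ^ 2 - (f x - f'' x / 2 * (x - x) ^ 2)
          - (f' x - f'' x * (x - x)) * (t - x)| := by
        rw [secondOrderRemainder]
        ring_nf
    _ ≤ C * |t - x| * |t - x| := h
    _ = C * (t - x) ^ 2 := by rw [mul_assoc, ← sq, sq_abs]

theorem hasUniformSecondOrderExpansionOn_singleton (hs : Convex ℝ s) (hx : x ∈ s)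
    (hf : ∀ᶠ y in 𝓝[s] x, HasDerivWithinAt f (f' y) s y)
    (hf' : HasDerivWithinAt f' (f'' x) s x) :
    HasUniformSecondOrderExpansionOn f f' f'' {x} s := by
  intro ε hε
  obtain ⟨δ, hδ, h_near⟩ := Metric.nhdsWithin_basis_ball.eventually_iff.1
    (hf.and (hf'.hasFDerivWithinAt.isLittleO.def hε))
  refine ⟨δ, hδ, fun y hy t ht h_lt => ?_⟩
  obtain rfl : y = x := hy
  have h_sub : Set.uIcc y t ⊆ s := segment_eq_uIcc y t ▸ hs.segment_subset hx ht
  have h_mem (z : ℝ) (hz : z ∈ Set.uIcc y t) := h_near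
    ⟨(Set.abs_sub_left_of_mem_uIcc hz).trans_lt h_lt, h_sub hz⟩
  refine abs_secondOrderRemainder_le_of_abs_deriv_sub_sub_le
    (fun z hz => (h_mem z hz).1.mono h_sub) fun z hz => ?_
  simpa [mul_comm (f'' y)] using (h_mem z hz).2

theorem hasUniformSecondOrderExpansionOn_of_continuousOn (hs : Convex ℝ s) (hs' : IsCompact s)
    (hf : ∀ y ∈ s, HasDerivWithinAt f (f' y) s y)
    (hf' : ∀ y ∈ s, HasDerivWithinAt f' (f'' y) s y) (hf'' : ContinuousOn f'' s) :
    HasUniformSecondOrderExpansionOn f f' f'' s s := by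
  intro ε hε
  obtain ⟨δ, hδ, h_near⟩ := Metric.uniformContinuousOn_iff.1
    (hs'.uniformContinuousOn_of_continuous hf'') ε hε
  refine ⟨δ, hδ, fun x hx t ht h_lt => ?_⟩
  have h_sub {y : ℝ} (hy : y ∈ s) : Set.uIcc x y ⊆ s :=
    segment_eq_uIcc x y ▸ hs.segment_subset hx hy
  refine abs_secondOrderRemainder_le_of_abs_deriv_sub_sub_le
    (fun y hy => (hf y (h_sub ht hy)).mono (h_sub ht)) fun y hy => ?_
  have hys := h_sub ht hy
  refine abs_sub_sub_mul_le_of_abs_deriv_sub_le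
    (fun z hz => (hf' z (h_sub hys hz)).mono (h_sub hys)) fun z hz => ?_
  have h_dist : dist z x < δ := (Set.abs_sub_left_of_mem_uIcc hz).trans_lt
    ((Set.abs_sub_left_of_mem_uIcc hy).trans_lt h_lt)
  exact (h_near z (h_sub hys hz) x hx h_dist).le

end TaylorExpansion

section Bernstein

theorem cast_choose_succ {R : Type*} [Field R] [CharZero R] (n k : ℕ) :
    (n.choose (k + 1) : R) = n.choose k * (n - k) / (k + 1) := by
  rw [eq_div_iff (by exact_mod_cast k.succ_ne_zero)]
  rcases le_or_gt k n with hkn | hnk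
  · exact_mod_cast congrArg (Nat.cast (R := R)) (Nat.choose_succ_right_eq n k)
  · simp [Nat.choose_eq_zero_of_lt hnk, Nat.choose_eq_zero_of_lt (hnk.trans k.lt_succ_self)]

theorem cast_add_succ_choose_succ {R : Type*} [Field R] [CharZero R] (n k : ℕ) :
    ((n + (k + 1)).choose (k + 1) : R) = (n + k).choose k * (n + k + 1) / (k + 1) := by
  rw [eq_div_iff (by exact_mod_cast k.succ_ne_zero), ← add_assoc, mul_comm ((n + k).choose k : R)]
  exact_mod_cast congrArg (Nat.cast (R := R)) (Nat.add_one_mul_choose_eq (n + k) k).symm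

theorem eval_bernsteinPolynomial {R : Type*} [CommRing R] (n k : ℕ) (x : R) :
    (bernsteinPolynomial R n k).eval x = n.choose k * x ^ k * (1 - x) ^ (n - k) := by
  simp [bernsteinPolynomial]

theorem sum_eval_bernsteinPolynomial_mul_choose {R : Type*} [CommRing R] (n i : ℕ) (x : R) :
    ∑ k ∈ Finset.range (n + 1), (bernsteinPolynomial R n k).eval x * k.choose i
      = n.choose i * x ^ i := by
  rcases lt_or_ge n i with hni | hin
  · rw [Nat.choose_eq_zero_of_lt hni, Nat.cast_zero, zero_mul]
    refine Finset.sum_eq_zero fun k hk => ?_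
    rw [Nat.choose_eq_zero_of_lt ((Finset.mem_range_succ_iff.1 hk).trans_lt hni), Nat.cast_zero,
      mul_zero]
  obtain ⟨d, rfl⟩ := Nat.exists_eq_add_of_le hin
  have h_low : ∑ k ∈ Finset.range i, (bernsteinPolynomial R (i + d) k).eval x * k.choose i = 0 :=
    Finset.sum_eq_zero fun k hk => by simp [Nat.choose_eq_zero_of_lt (Finset.mem_range.1 hk)]
  have h_term (l : ℕ) : (bernsteinPolynomial R (i + d) (i + l)).eval x * (i + l).choose i
      = (i + d).choose i * x ^ i * (bernsteinPolynomial R d l).eval x := by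
    have h_choose : ((i + d).choose (i + l) : R) * (i + l).choose i
        = (i + d).choose i * d.choose l := by
      have h := Nat.choose_mul (n := i + d) (Nat.le_add_right i l)
      simp only [Nat.add_sub_cancel_left] at h
      exact_mod_cast congrArg (Nat.cast (R := R)) h
    rw [eval_bernsteinPolynomial, eval_bernsteinPolynomial, Nat.add_sub_add_left, pow_add]
    linear_combination x ^ i * x ^ l * (1 - x) ^ (d - l) * h_choose
  rw [add_assoc, Finset.sum_range_add, h_low, zero_add, Finset.sum_congr rfl fun l _ => h_term l,
    ← Finset.mul_sum, ← Polynomial.eval_finsetSum, bernsteinPolynomial.sum, Polynomial.eval_one,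
    mul_one]

theorem integral_eval_bernsteinPolynomial {n k : ℕ} (hk : k ≤ n) :
    ∫ t in (0 : ℝ)..1, (bernsteinPolynomial ℝ n k).eval t = 1 / (n + 1) := by
  have integral_derivative (p : Polynomial ℝ) :
      ∫ t in (0 : ℝ)..1, p.derivative.eval t = p.eval 1 - p.eval 0 :=
    intervalIntegral.integral_eq_sub_of_hasDerivAt (fun t _ => p.hasDerivAt t)
      (p.derivative.continuous.intervalIntegrable 0 1)
  have hn : (n : ℝ) + 1 ≠ 0 := n.cast_add_one_ne_zero
  induction k with
  | zero =>
    have h := integral_derivative (bernsteinPolynomial ℝ (n + 1) 0)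
    simp only [bernsteinPolynomial.derivative_zero, bernsteinPolynomial.eval_at_0,
      bernsteinPolynomial.eval_at_1, Nat.add_sub_cancel, Polynomial.eval_mul, Polynomial.eval_neg,
      Polynomial.eval_natCast, intervalIntegral.integral_const_mul, n.succ_ne_zero.symm,
      if_true, if_false] at h
    push_cast at h
    rw [eq_div_iff hn]
    linear_combination -h
  | succ k ih =>
    have h := integral_derivative (bernsteinPolynomial ℝ (n + 1) (k + 1))
    simp only [bernsteinPolynomial.derivative_succ, bernsteinPolynomial.eval_at_0,
      bernsteinPolynomial.eval_at_1, Nat.add_sub_cancel, Polynomial.eval_mul, Polynomial.eval_sub,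
      Polynomial.eval_natCast, intervalIntegral.integral_const_mul, k.succ_ne_zero,
      Nat.add_right_cancel_iff, (Nat.lt_of_succ_le hk).ne, if_false] at h
    rw [intervalIntegral.integral_sub (Polynomial.continuous _ |>.intervalIntegrable _ _)
      (Polynomial.continuous _ |>.intervalIntegrable _ _), sub_zero, Nat.cast_add_one] at h
    rw [← ih (Nat.le_of_succ_le hk)]
    exact (sub_eq_zero.1 ((mul_eq_zero.1 h).resolve_left hn)).symm

theorem integral_eval_bernsteinPolynomial_mul_pow {n k : ℕ} (hk : k ≤ n) (j : ℕ) :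
    ((n : ℝ) + 1) * ∫ t in (0 : ℝ)..1, (bernsteinPolynomial ℝ n k).eval t * t ^ j
      = (k + j).choose j / (n + 1 + j).choose j := by
  have h_choose_pos (a b : ℕ) (h : b ≤ a) : (a.choose b : ℝ) ≠ 0 :=
    Nat.cast_ne_zero.2 (Nat.choose_pos h).ne'
  have h_shift (t : ℝ) : (bernsteinPolynomial ℝ n k).eval t * t ^ j
      = n.choose k / (n + j).choose (k + j) * (bernsteinPolynomial ℝ (n + j) (k + j)).eval t := by
    have := h_choose_pos (n + j) (k + j) (by lia)
    rw [eval_bernsteinPolynomial, eval_bernsteinPolynomial, Nat.add_sub_add_right]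
    field_simp
    ring
  have h_choose : ((n + j).choose (k + j) : ℝ) * (k + j).choose j
      = (n + j).choose j * n.choose k := by
    exact_mod_cast (by simpa using Nat.choose_mul (n := n + j) (Nat.le_add_left j k))
  have h_choose' : ((n + j).choose j : ℝ) * (n + 1 + j) = (n + 1 + j).choose j * (n + 1) := by
    have := Nat.choose_mul_succ_eq (n + j) j
    rw [show n + j + 1 - j = n + 1 by lia, add_right_comm] at this
    exact_mod_cast this
  have h₁ := h_choose_pos (n + j) (k + j) (by lia)
  have h₂ := h_choose_pos (n + 1 + j) j (by lia)
  have h₃ : (n : ℝ) + j + 1 ≠ 0 := by positivity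
  simp only [h_shift, intervalIntegral.integral_const_mul,
    integral_eval_bernsteinPolynomial (Nat.add_le_add_right hk j), Nat.cast_add]
  field_simp
  refine mul_left_cancel₀ (h_choose_pos (n + j) j (Nat.le_add_left j n)) ?_
  linear_combination -((n + 1 + j).choose j * (n + 1) : ℝ) * h_choose
    - ((n + j).choose (k + j) * (k + j).choose j : ℝ) * h_choose'

end Bernstein

section DurrmeyerKernel

open intervalIntegral Finset

/-- The kernel `(m + 2) ∑ₖ p_{m,k}(x) p_{m+1,k}(t)` coupling the Bernstein bases of degrees `m` and
`m + 1`. It is one of the two halves of the kernel of `DM1` at `n = m + 1`; the shifted index avoids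
the truncated subtraction `n - 1`. -/
noncomputable def durrmeyerKernel (m : ℕ) (x t : ℝ) : ℝ :=
  (m + 2) * ∑ k ∈ range (m + 1),
    (bernsteinPolynomial ℝ m k).eval x * (bernsteinPolynomial ℝ (m + 1) k).eval t

theorem continuous_durrmeyerKernel (m : ℕ) (x : ℝ) : Continuous (durrmeyerKernel m x) := by
  unfold durrmeyerKernel
  fun_prop

theorem durrmeyerKernel_nonneg (m : ℕ) {x t : ℝ} (hx : x ∈ Set.Icc (0 : ℝ) 1)
    (ht : t ∈ Set.Icc (0 : ℝ) 1) : 0 ≤ durrmeyerKernel m x t := by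
  have eval_nonneg (n k : ℕ) {y : ℝ} (hy : y ∈ Set.Icc (0 : ℝ) 1) :
      0 ≤ (bernsteinPolynomial ℝ n k).eval y := by
    have hy₀ := hy.1
    have hy₁ := sub_nonneg.2 hy.2
    rw [eval_bernsteinPolynomial]
    positivity
  exact mul_nonneg (by positivity)
    (sum_nonneg fun k _ => mul_nonneg (eval_nonneg m k hx) (eval_nonneg (m + 1) k ht))

theorem durrmeyerKernel_one_sub_one_sub (m : ℕ) (x t : ℝ) :
    durrmeyerKernel m (1 - x) (1 - t) = (m + 2) * ∑ k ∈ range (m + 1),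
      (bernsteinPolynomial ℝ m k).eval x * (bernsteinPolynomial ℝ (m + 1) (k + 1)).eval t := by
  have eval_one_sub {n k : ℕ} (hk : k ≤ n) (y : ℝ) :
      (bernsteinPolynomial ℝ n k).eval (1 - y) = (bernsteinPolynomial ℝ n (n - k)).eval y := by
    rw [← bernsteinPolynomial.flip ℝ n k hk, Polynomial.eval_comp]
    simp
  rw [durrmeyerKernel, ← sum_range_reflect]
  refine congrArg _ (sum_congr rfl fun k hk => ?_)
  have hkm : k ≤ m := mem_range_succ_iff.1 hk
  rw [eval_one_sub (by lia), eval_one_sub (by lia), show m - (m + 1 - 1 - k) = k by lia,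
    show m + 1 - (m + 1 - 1 - k) = k + 1 by lia]

theorem integral_durrmeyerKernel_mul_pow (m j : ℕ) (x : ℝ) :
    ∫ t in (0 : ℝ)..1, durrmeyerKernel m x t * t ^ j
      = (∑ i ∈ range (j + 1), j.choose i * m.choose i * x ^ i) / (m + 2 + j).choose j := by
  have h_moment {k : ℕ} (hk : k ∈ range (m + 1)) :
      (m + 2) * ∫ t in (0 : ℝ)..1, (bernsteinPolynomial ℝ (m + 1) k).eval t * t ^ j
        = (∑ i ∈ range (j + 1), (j.choose i : ℝ) * k.choose i) / (m + 2 + j).choose j := by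
    have h := integral_eval_bernsteinPolynomial_mul_pow (mem_range.1 hk).le j
    rw [Nat.cast_add_one, add_assoc, one_add_one_eq_two] at h
    rw [h, Nat.add_choose_eq, Nat.sum_antidiagonal_eq_sum_range_succ_mk]
    push_cast
    refine congrArg (· / _) (sum_congr rfl fun i hi => ?_)
    rw [Nat.choose_symm (mem_range_succ_iff.1 hi), mul_comm]
  calc ∫ t in (0 : ℝ)..1, durrmeyerKernel m x t * t ^ j
      = ∑ k ∈ range (m + 1), (bernsteinPolynomial ℝ m k).eval x
          * ((m + 2) * ∫ t in (0 : ℝ)..1, (bernsteinPolynomial ℝ (m + 1) k).eval t * t ^ j) := by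
        simp only [durrmeyerKernel, mul_sum, sum_mul]
        rw [integral_finsetSum fun k _ => Continuous.intervalIntegrable (by fun_prop) _ _]
        simp only [mul_assoc, integral_const_mul, mul_left_comm]
    _ = ∑ i ∈ range (j + 1), ∑ k ∈ range (m + 1),
          j.choose i * ((bernsteinPolynomial ℝ m k).eval x * k.choose i)
            / (m + 2 + j).choose j := by
        rw [sum_comm]
        refine sum_congr rfl fun k hk => ?_
        rw [h_moment hk, sum_div, mul_sum]
        exact sum_congr rfl fun i _ => by ring
    _ = _ := by
        simp only [← sum_div, ← mul_sum, sum_eval_bernsteinPolynomial_mul_choose, mul_assoc]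

theorem integral_durrmeyerKernel_mul_sub_pow (m j : ℕ) (x : ℝ) :
    ∫ t in (0 : ℝ)..1, durrmeyerKernel m x t * (t - x) ^ j
      = ∑ i ∈ range (j + 1), j.choose i * (-x) ^ (j - i)
          * ∫ t in (0 : ℝ)..1, durrmeyerKernel m x t * t ^ i := by
  have h_cont := continuous_durrmeyerKernel m x
  simp only [sub_eq_add_neg _ x, add_pow, mul_sum]
  rw [integral_finsetSum fun i _ => Continuous.intervalIntegrable (by fun_prop) _ _]
  refine sum_congr rfl fun i _ => ?_
  rw [← integral_const_mul]
  exact integral_congr fun t _ => by ring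

theorem integral_durrmeyerKernel (m : ℕ) (x : ℝ) :
    ∫ t in (0 : ℝ)..1, durrmeyerKernel m x t = 1 := by
  simpa using integral_durrmeyerKernel_mul_pow m 0 x

theorem integral_durrmeyerKernel_mul_sub (m : ℕ) (x : ℝ) :
    ∫ t in (0 : ℝ)..1, durrmeyerKernel m x t * (t - x) = (1 - 3 * x) / (m + 3) := by
  have h := integral_durrmeyerKernel_mul_sub_pow m 1 x
  simp only [integral_durrmeyerKernel_mul_pow, sum_range_succ, sum_range_zero, pow_one] at h
  rw [h]
  norm_num
  field_simp
  ring_nf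

theorem integral_durrmeyerKernel_mul_sub_sq (m : ℕ) (x : ℝ) :
    ∫ t in (0 : ℝ)..1, durrmeyerKernel m x t * (t - x) ^ 2
      = (2 * x * (1 - x) * m + 2 - 8 * x + 12 * x ^ 2) / ((m + 3) * (m + 4)) := by
  rw [integral_durrmeyerKernel_mul_sub_pow]
  simp only [integral_durrmeyerKernel_mul_pow, sum_range_succ, sum_range_zero,
    cast_add_succ_choose_succ (m + 2), cast_choose_succ m]
  norm_num [add_assoc]
  field_simp
  ring_nf

theorem integral_durrmeyerKernel_mul_sub_pow_four (m : ℕ) (x : ℝ) :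
    ∫ t in (0 : ℝ)..1, durrmeyerKernel m x t * (t - x) ^ 4
      = (24 - 144 * x + 360 * x ^ 2 - 480 * x ^ 3 + 360 * x ^ 4
          + (72 * x - 372 * x ^ 2 + 672 * x ^ 3 - 372 * x ^ 4) * m
          + 12 * x ^ 2 * (1 - x) ^ 2 * m ^ 2)
        / ((m + 3) * (m + 4) * (m + 5) * (m + 6)) := by
  rw [integral_durrmeyerKernel_mul_sub_pow]
  simp only [integral_durrmeyerKernel_mul_pow, sum_range_succ, sum_range_zero,
    cast_add_succ_choose_succ (m + 2), cast_choose_succ m]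
  norm_num [add_assoc, Nat.choose]
  field_simp
  ring_nf

theorem integral_durrmeyerKernel_one_sub_mul_sub_pow (m j : ℕ) (x : ℝ) :
    ∫ t in (0 : ℝ)..1, durrmeyerKernel m (1 - x) (1 - t) * (t - x) ^ j
      = (-1) ^ j * ∫ t in (0 : ℝ)..1, durrmeyerKernel m (1 - x) t * (t - (1 - x)) ^ j := by
  have h := integral_comp_sub_left (a := 0) (b := 1)
    (fun t => durrmeyerKernel m (1 - x) t * (t - (1 - x)) ^ j) 1
  rw [sub_self, sub_zero] at h
  rw [← h, ← integral_const_mul]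
  refine integral_congr fun t _ => ?_
  change _ = (-1) ^ j * (_ * (1 - t - (1 - x)) ^ j)
  rw [mul_left_comm, ← mul_pow]
  congr 2
  ring

theorem integral_durrmeyerKernel_mul_sub_sq_le (m : ℕ) {x : ℝ} (hx : x ∈ Set.Icc (0 : ℝ) 1) :
    ∫ t in (0 : ℝ)..1, durrmeyerKernel m x t * (t - x) ^ 2 ≤ 6 / (m + 1) := by
  obtain ⟨hx₀, hx₁⟩ := hx
  have h_var : x * (1 - x) ≤ 1 / 4 := by nlinarith [sq_nonneg (2 * x - 1)]
  rw [integral_durrmeyerKernel_mul_sub_sq, div_le_div_iff₀ (by positivity) (by positivity)]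
  have h_num : 2 * x * (1 - x) * m + 2 - 8 * x + 12 * x ^ 2 ≤ m + 6 := by
    nlinarith [m.cast_nonneg (α := ℝ)]
  nlinarith [mul_le_mul_of_nonneg_right h_num (by positivity : (0 : ℝ) ≤ m + 1),
    m.cast_nonneg (α := ℝ)]

theorem integral_durrmeyerKernel_mul_sub_pow_four_le (m : ℕ) {x : ℝ}
    (hx : x ∈ Set.Icc (0 : ℝ) 1) :
    ∫ t in (0 : ℝ)..1, durrmeyerKernel m x t * (t - x) ^ 4 ≤ 744 / (m + 1) ^ 2 := by
  obtain ⟨hx₀, hx₁⟩ := hx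
  have hm := m.cast_nonneg (α := ℝ)
  have h_pow (j : ℕ) : x ^ j ∈ Set.Icc (0 : ℝ) 1 := ⟨by positivity, pow_le_one₀ hx₀ hx₁⟩
  rw [integral_durrmeyerKernel_mul_sub_pow_four, div_le_div_iff₀ (by positivity) (by positivity)]
  have h_const : 24 - 144 * x + 360 * x ^ 2 - 480 * x ^ 3 + 360 * x ^ 4 ≤ 744 := by
    linarith [(h_pow 2).2, (h_pow 3).1, (h_pow 4).2]
  have h_lin : 72 * x - 372 * x ^ 2 + 672 * x ^ 3 - 372 * x ^ 4 ≤ 744 := by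
    linarith [(h_pow 2).1, (h_pow 3).2, (h_pow 4).1]
  have h_quad : 12 * x ^ 2 * (1 - x) ^ 2 ≤ 744 := by
    nlinarith [mul_le_one₀ (h_pow 2).2 (sq_nonneg (1 - x)) (by nlinarith : (1 - x) ^ 2 ≤ 1)]
  have h_num := add_le_add (add_le_add h_const (mul_le_mul_of_nonneg_right h_lin hm))
    (mul_le_mul_of_nonneg_right h_quad (sq_nonneg (m : ℝ)))
  calc _ ≤ (744 + 744 * m + 744 * m ^ 2 : ℝ) * (m + 1) ^ 2 := by gcongr
    _ ≤ _ := by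
      rw [← sub_nonneg]
      ring_nf
      positivity

end DurrmeyerKernel

section ModifiedDurrmeyerKernel

open intervalIntegral Finset

/-- The kernel of the modified Durrmeyer operator `DM1` at `n = m + 1` for coefficients
`a₀ = a_0(n)` and `a₁ = a_1(n)`. -/
noncomputable def modifiedDurrmeyerKernel (a₀ a₁ : ℝ) (m : ℕ) (x t : ℝ) : ℝ :=
  (a₁ * x + a₀) * durrmeyerKernel m x t
    + (a₁ * (1 - x) + a₀) * durrmeyerKernel m (1 - x) (1 - t)

/-- The symmetrized Durrmeyer kernel, a positive kernel which dominates `modifiedDurrmeyerKernel` up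
to a constant factor. -/
noncomputable def symmDurrmeyerKernel (m : ℕ) (x t : ℝ) : ℝ :=
  durrmeyerKernel m x t + durrmeyerKernel m (1 - x) (1 - t)

theorem continuous_modifiedDurrmeyerKernel (a₀ a₁ : ℝ) (m : ℕ) (x : ℝ) :
    Continuous (modifiedDurrmeyerKernel a₀ a₁ m x) := by
  have h (y : ℝ) := continuous_durrmeyerKernel m y
  unfold modifiedDurrmeyerKernel
  fun_prop

theorem symmDurrmeyerKernel_eq_modifiedDurrmeyerKernel :
    symmDurrmeyerKernel = modifiedDurrmeyerKernel 1 0 := by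
  ext
  simp [symmDurrmeyerKernel, modifiedDurrmeyerKernel]

theorem symmDurrmeyerKernel_nonneg (m : ℕ) {x t : ℝ} (hx : x ∈ Set.Icc (0 : ℝ) 1)
    (ht : t ∈ Set.Icc (0 : ℝ) 1) : 0 ≤ symmDurrmeyerKernel m x t :=
  add_nonneg (durrmeyerKernel_nonneg m hx ht)
    (durrmeyerKernel_nonneg m (Set.Icc.mem_iff_one_sub_mem.1 hx) (Set.Icc.mem_iff_one_sub_mem.1 ht))

theorem abs_modifiedDurrmeyerKernel_le {a₀ a₁ : ℝ} (ha : 2 * a₀ + a₁ = 1) (m : ℕ) {x t : ℝ}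
    (hx : x ∈ Set.Icc (0 : ℝ) 1) (ht : t ∈ Set.Icc (0 : ℝ) 1) :
    |modifiedDurrmeyerKernel a₀ a₁ m x t| ≤ (1 + |a₀|) * symmDurrmeyerKernel m x t := by
  have h_coeff {y : ℝ} (hy : y ∈ Set.Icc (0 : ℝ) 1) : |a₁ * y + a₀| ≤ 1 + |a₀| := by
    calc |a₁ * y + a₀| = |y + a₀ * (1 - 2 * y)| := by
          rw [eq_sub_of_add_eq' ha]
          ring_nf
      _ ≤ |y| + |a₀| * |1 - 2 * y| := (abs_add_le _ _).trans_eq (by rw [abs_mul])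
      _ ≤ 1 + |a₀| * 1 := by
        gcongr <;> exact abs_le.2 ⟨by linarith [hy.1, hy.2], by linarith [hy.1, hy.2]⟩
      _ = 1 + |a₀| := by rw [mul_one]
  have hx' := Set.Icc.mem_iff_one_sub_mem.1 hx
  have ht' := Set.Icc.mem_iff_one_sub_mem.1 ht
  calc |modifiedDurrmeyerKernel a₀ a₁ m x t|
      ≤ |a₁ * x + a₀| * durrmeyerKernel m x t
        + |a₁ * (1 - x) + a₀| * durrmeyerKernel m (1 - x) (1 - t) := by
        refine (abs_add_le _ _).trans_eq ?_
        rw [abs_mul, abs_mul, abs_of_nonneg (durrmeyerKernel_nonneg m hx ht),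
          abs_of_nonneg (durrmeyerKernel_nonneg m hx' ht')]
    _ ≤ (1 + |a₀|) * durrmeyerKernel m x t
        + (1 + |a₀|) * durrmeyerKernel m (1 - x) (1 - t) := by
        gcongr
        exacts [durrmeyerKernel_nonneg m hx ht, h_coeff hx, durrmeyerKernel_nonneg m hx' ht',
          h_coeff hx']
    _ = (1 + |a₀|) * symmDurrmeyerKernel m x t := (mul_add _ _ _).symm

theorem bern_eq_eval_bernsteinPolynomial (n k : ℕ) (x : ℝ) :
    bern n k x = (bernsteinPolynomial ℝ n k).eval x := by
  rw [bern, eval_bernsteinPolynomial]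
  split_ifs with h
  · simp
  · rw [Nat.choose_eq_zero_of_lt (by lia)]
    simp

theorem integral_modifiedDurrmeyerKernel_mul (a₀ a₁ : ℝ) (m : ℕ) (x : ℝ) {f : ℝ → ℝ}
    (hf : IntervalIntegrable f MeasureTheory.volume 0 1) :
    ∫ t in (0 : ℝ)..1, modifiedDurrmeyerKernel a₀ a₁ m x t * f t
      = (a₁ * x + a₀) * (∫ t in (0 : ℝ)..1, durrmeyerKernel m x t * f t)
        + (a₁ * (1 - x) + a₀)
          * ∫ t in (0 : ℝ)..1, durrmeyerKernel m (1 - x) (1 - t) * f t := by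
  have h_cont (y : ℝ) := continuous_durrmeyerKernel m y
  simp only [modifiedDurrmeyerKernel, add_mul _ _ (f _), mul_assoc]
  rw [integral_add ((hf.continuousOn_mul (by fun_prop)).const_mul _)
      ((hf.continuousOn_mul (by fun_prop)).const_mul _), integral_const_mul, integral_const_mul]

theorem modifiedDurrmeyerKernel_eq_sum_pM1 (a0 a1 : ℕ → ℝ) (m : ℕ) (x t : ℝ) :
    modifiedDurrmeyerKernel (a0 (m + 1)) (a1 (m + 1)) m x t
      = (m + 2) * ∑ k ∈ range (m + 2), pM1 a0 a1 (m + 1) k x * bern (m + 1) k t := by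
  have h_top : bern m (m + 1 : ℕ) x = 0 := by simp [bern]
  have h_bot : bern m ((0 : ℕ) - 1) x = 0 := by simp [bern]
  have h_pred (k : ℕ) : ((k + 1 : ℕ) : ℤ) - 1 = k := by push_cast; ring
  rw [modifiedDurrmeyerKernel, durrmeyerKernel_one_sub_one_sub, durrmeyerKernel]
  simp only [pM1, Nat.add_sub_cancel, add_mul (_ * bern _ _ _), sum_add_distrib]
  rw [sum_range_succ _ (m + 1), h_top, sum_range_succ' _ (m + 1), h_bot]
  simp only [h_pred, bern_eq_eval_bernsteinPolynomial, mul_assoc, ← mul_sum]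
  ring

theorem DM1_succ_eq_integral (a0 a1 : ℕ → ℝ) (m : ℕ) {f : ℝ → ℝ}
    (hf : IntervalIntegrable f MeasureTheory.volume 0 1) (x : ℝ) :
    DM1 a0 a1 (m + 1) f x
      = ∫ t in (0 : ℝ)..1, modifiedDurrmeyerKernel (a0 (m + 1)) (a1 (m + 1)) m x t * f t := by
  have h_int (k : ℕ) : IntervalIntegrable (fun t => bern (m + 1) k t * f t)
      MeasureTheory.volume 0 1 := by
    simp only [bern_eq_eval_bernsteinPolynomial]
    exact hf.continuousOn_mul (Polynomial.continuous _).continuousOn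
  simp only [modifiedDurrmeyerKernel_eq_sum_pM1, mul_assoc, sum_mul, integral_const_mul]
  rw [integral_finsetSum fun k _ => (h_int k).const_mul _, DM1, Nat.cast_add_one, add_assoc,
    one_add_one_eq_two]
  simp only [integral_const_mul]

theorem integral_modifiedDurrmeyerKernel_mul_sub_pow (a₀ a₁ : ℝ) (m j : ℕ) (x : ℝ) :
    ∫ t in (0 : ℝ)..1, modifiedDurrmeyerKernel a₀ a₁ m x t * (t - x) ^ j
      = (a₁ * x + a₀) * (∫ t in (0 : ℝ)..1, durrmeyerKernel m x t * (t - x) ^ j)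
        + (a₁ * (1 - x) + a₀)
          * ((-1) ^ j * ∫ t in (0 : ℝ)..1, durrmeyerKernel m (1 - x) t * (t - (1 - x)) ^ j) := by
  rw [integral_modifiedDurrmeyerKernel_mul _ _ _ _
      (Continuous.intervalIntegrable (by fun_prop) _ _),
    integral_durrmeyerKernel_one_sub_mul_sub_pow]

theorem integral_modifiedDurrmeyerKernel {a₀ a₁ : ℝ} (ha : 2 * a₀ + a₁ = 1) (m : ℕ) (x : ℝ) :
    ∫ t in (0 : ℝ)..1, modifiedDurrmeyerKernel a₀ a₁ m x t = 1 := by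
  have h := integral_modifiedDurrmeyerKernel_mul_sub_pow a₀ a₁ m 0 x
  simp only [pow_zero, mul_one, integral_durrmeyerKernel] at h
  linear_combination h + ha

theorem integral_modifiedDurrmeyerKernel_mul_sub {a₀ a₁ : ℝ} (ha : 2 * a₀ + a₁ = 1) (m : ℕ)
    (x : ℝ) :
    ∫ t in (0 : ℝ)..1, modifiedDurrmeyerKernel a₀ a₁ m x t * (t - x)
      = (1 - 2 * x) * (2 - a₀) / (m + 3) := by
  have h := integral_modifiedDurrmeyerKernel_mul_sub_pow a₀ a₁ m 1 x
  simp only [pow_one, integral_durrmeyerKernel_mul_sub] at h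
  rw [h, eq_sub_of_add_eq' ha]
  ring

theorem integral_modifiedDurrmeyerKernel_mul_sub_sq {a₀ a₁ : ℝ} (ha : 2 * a₀ + a₁ = 1) (m : ℕ)
    (x : ℝ) :
    ∫ t in (0 : ℝ)..1, modifiedDurrmeyerKernel a₀ a₁ m x t * (t - x) ^ 2
      = (x * (1 - x) * (2 * m - 20 + 16 * a₀) + 6 - 4 * a₀) / ((m + 3) * (m + 4)) := by
  rw [integral_modifiedDurrmeyerKernel_mul_sub_pow, integral_durrmeyerKernel_mul_sub_sq,
    integral_durrmeyerKernel_mul_sub_sq, eq_sub_of_add_eq' ha]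
  ring

theorem integral_symmDurrmeyerKernel_mul_sub_pow_le {m j : ℕ} (hj : Even j) {C : ℝ}
    (hC : ∀ y ∈ Set.Icc (0 : ℝ) 1, ∫ t in (0 : ℝ)..1, durrmeyerKernel m y t * (t - y) ^ j ≤ C)
    {x : ℝ} (hx : x ∈ Set.Icc (0 : ℝ) 1) :
    ∫ t in (0 : ℝ)..1, symmDurrmeyerKernel m x t * (t - x) ^ j ≤ 2 * C := by
  rw [symmDurrmeyerKernel_eq_modifiedDurrmeyerKernel, integral_modifiedDurrmeyerKernel_mul_sub_pow,
    hj.neg_one_pow]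
  linarith [hC x hx, hC (1 - x) (Set.Icc.mem_iff_one_sub_mem.1 hx)]

end ModifiedDurrmeyerKernel

section VoronovskajaKernel

theorem tendsto_add_natCast_mul_div_add_natCast (a b c : ℝ) :
    Tendsto (fun m : ℕ => (a + c * m) / (m + b)) atTop (𝓝 c) := by
  simpa [add_comm] using tendsto_add_mul_div_add_mul_atTop_nhds a b c one_ne_zero

variable {a₀ a₁ : ℕ → ℝ} {l₀ : ℝ}

theorem tendstoUniformlyOn_modifiedDurrmeyerKernel_moment_one (hl₀ : Tendsto a₀ atTop (𝓝 l₀))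
    (ha : ∀ m, 2 * a₀ m + a₁ m = 1) :
    TendstoUniformlyOn (fun (m : ℕ) x => ((m : ℝ) + 1)
        * ∫ t in (0 : ℝ)..1, modifiedDurrmeyerKernel (a₀ m) (a₁ m) m x t * (t - x))
      (fun x => (1 - 2 * x) * (2 - l₀)) atTop (Set.Icc 0 1) := by
  have h_coeff : Tendsto (fun m : ℕ => (1 + 1 * (m : ℝ)) / (m + 3) * (2 - a₀ m)) atTop
      (𝓝 (2 - l₀)) := by
    simpa using (tendsto_add_natCast_mul_div_add_natCast 1 3 1).mul (hl₀.const_sub 2)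
  refine (tendstoUniformlyOn_mul_left_of_norm_le (M := 1) (h_coeff.tendstoUniformlyOn_const _)
    fun x hx => abs_le.2 ⟨by linarith [hx.2], by linarith [hx.1]⟩).congr
    (.of_forall fun m x _ => ?_)
  simp only [integral_modifiedDurrmeyerKernel_mul_sub (ha m)]
  ring

theorem tendstoUniformlyOn_modifiedDurrmeyerKernel_moment_two (hl₀ : Tendsto a₀ atTop (𝓝 l₀))
    (ha : ∀ m, 2 * a₀ m + a₁ m = 1) :
    TendstoUniformlyOn (fun (m : ℕ) x => ((m : ℝ) + 1)
        * ∫ t in (0 : ℝ)..1, modifiedDurrmeyerKernel (a₀ m) (a₁ m) m x t * (t - x) ^ 2)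
      (fun x => x * (1 - x) * 2) atTop (Set.Icc 0 1) := by
  have h_ratio := tendsto_add_natCast_mul_div_add_natCast 1 3 1
  have h_inv := tendsto_add_natCast_mul_div_add_natCast 1 4 0
  have h_main : Tendsto (fun m : ℕ => (1 + 1 * (m : ℝ)) / (m + 3) * ((-20 + 2 * (m : ℝ)) / (m + 4)
      + 16 * a₀ m * ((1 + 0 * m) / (m + 4)))) atTop (𝓝 2) := by
    simpa using h_ratio.mul ((tendsto_add_natCast_mul_div_add_natCast (-20) 4 2).add
      ((hl₀.const_mul 16).mul h_inv))
  have h_rest : Tendsto (fun m : ℕ => (1 + 1 * (m : ℝ)) / (m + 3) * ((6 - 4 * a₀ m)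
      * ((1 + 0 * m) / (m + 4)))) atTop (𝓝 0) := by
    simpa using h_ratio.mul (((hl₀.const_mul 4).const_sub 6).mul h_inv)
  have h_main' := tendstoUniformlyOn_mul_left_of_norm_le (S := Set.Icc 0 1)
    (h := fun x : ℝ => x * (1 - x)) (M := 1) (h_main.tendstoUniformlyOn_const _)
    fun x hx => abs_le.2 ⟨by nlinarith [hx.1, hx.2], by nlinarith [hx.1, hx.2]⟩
  refine ((h_main'.add (h_rest.tendstoUniformlyOn_const _)).congr
    (.of_forall fun m x _ => ?_)).congr_right fun x _ => add_zero _
  simp only [integral_modifiedDurrmeyerKernel_mul_sub_sq (ha m), Pi.add_apply]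
  field_simp
  ring

theorem exists_forall_symmDurrmeyerKernel_moment_two_le (hl₀ : Tendsto a₀ atTop (𝓝 l₀)) :
    ∃ B, ∀ m : ℕ, ∀ x ∈ Set.Icc (0 : ℝ) 1, ((m : ℝ) + 1)
      * ∫ t in (0 : ℝ)..1, (1 + |a₀ m|) * symmDurrmeyerKernel m x t * (t - x) ^ 2 ≤ B := by
  obtain ⟨A, hA⟩ := hl₀.abs.bddAbove_range
  refine ⟨(1 + A) * 12, fun m x hx => ?_⟩
  have h := integral_symmDurrmeyerKernel_mul_sub_pow_le even_two
    (fun y => integral_durrmeyerKernel_mul_sub_sq_le m) hx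
  simp only [mul_assoc, intervalIntegral.integral_const_mul]
  calc _ ≤ ((m : ℝ) + 1) * ((1 + |a₀ m|) * (2 * (6 / (m + 1)))) := by gcongr
    _ = (1 + |a₀ m|) * 12 := by field_simp; norm_num
    _ ≤ (1 + A) * 12 := by gcongr; exact hA ⟨m, rfl⟩

theorem tendstoUniformlyOn_symmDurrmeyerKernel_moment_four (hl₀ : Tendsto a₀ atTop (𝓝 l₀)) :
    TendstoUniformlyOn (fun (m : ℕ) x => ((m : ℝ) + 1)
        * ∫ t in (0 : ℝ)..1, (1 + |a₀ m|) * symmDurrmeyerKernel m x t * (t - x) ^ 4)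
      0 atTop (Set.Icc 0 1) := by
  have h_bound : Tendsto (fun m : ℕ => (1 + |a₀ m|) * ((1488 + 0 * (m : ℝ)) / (m + 1))) atTop
      (𝓝 0) := by
    simpa using (hl₀.abs.const_add 1).mul (tendsto_add_natCast_mul_div_add_natCast 1488 1 0)
  rw [Metric.tendstoUniformlyOn_iff]
  intro ε hε
  filter_upwards [h_bound.eventually_lt_const hε] with m hm x hx
  have h := integral_symmDurrmeyerKernel_mul_sub_pow_le (by decide)
    (fun y => integral_durrmeyerKernel_mul_sub_pow_four_le m) hx
  have h_nonneg : 0 ≤ ∫ t in (0 : ℝ)..1, symmDurrmeyerKernel m x t * (t - x) ^ 4 :=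
    intervalIntegral.integral_nonneg zero_le_one fun t ht =>
      mul_nonneg (symmDurrmeyerKernel_nonneg m hx ht) (by positivity)
  simp only [mul_assoc, intervalIntegral.integral_const_mul, Pi.zero_apply, dist_zero_left]
  rw [Real.norm_of_nonneg (by positivity)]
  calc _ ≤ ((m : ℝ) + 1) * ((1 + |a₀ m|) * (2 * (744 / (m + 1) ^ 2))) := by gcongr
    _ = (1 + |a₀ m|) * ((1488 + 0 * m) / (m + 1)) := by field_simp; norm_num
    _ < ε := hm

theorem isVoronovskajaKernel_modifiedDurrmeyerKernel (hl₀ : Tendsto a₀ atTop (𝓝 l₀))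
    (ha : ∀ m, 2 * a₀ m + a₁ m = 1) :
    IsVoronovskajaKernel atTop 0 1 (Set.Icc 0 1) (fun m : ℕ => (m : ℝ) + 1)
      (fun m => modifiedDurrmeyerKernel (a₀ m) (a₁ m) m)
      (fun m x t => (1 + |a₀ m|) * symmDurrmeyerKernel m x t)
      (fun x => (1 - 2 * x) * (2 - l₀)) (fun x => x * (1 - x) * 2) where
  scale_nonneg m := by positivity
  continuousOn m x _ := (continuous_modifiedDurrmeyerKernel _ _ m x).continuousOn
  continuousOn_majorant m x _ := by
    rw [symmDurrmeyerKernel_eq_modifiedDurrmeyerKernel]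
    exact ((continuous_modifiedDurrmeyerKernel _ _ m x).const_mul _).continuousOn
  abs_le m x hx t ht := abs_modifiedDurrmeyerKernel_le (ha m) m hx ht
  integral_eq_one m x _ := integral_modifiedDurrmeyerKernel (ha m) m x
  tendsto_moment_one := tendstoUniformlyOn_modifiedDurrmeyerKernel_moment_one hl₀ ha
  tendsto_moment_two := tendstoUniformlyOn_modifiedDurrmeyerKernel_moment_two hl₀ ha
  bounded_majorant_moment_two := exists_forall_symmDurrmeyerKernel_moment_two_le hl₀
  tendsto_majorant_moment_four := tendstoUniformlyOn_symmDurrmeyerKernel_moment_four hl₀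

end VoronovskajaKernel

section DM1

open Set

variable {a0 a1 : ℕ → ℝ} {l0 l1 F M : ℝ} {T : Set ℝ} {f f' f'' : ℝ → ℝ}

theorem tendstoUniformlyOn_DM1_of_hasUniformSecondOrderExpansionOn
    (hl0 : Tendsto a0 atTop (𝓝 l0)) (hl1 : Tendsto a1 atTop (𝓝 l1))
    (hA : ∀ n, 2 * a0 n + a1 n = 1) (hf : IntervalIntegrable f MeasureTheory.volume 0 1)
    (hF : ∀ t ∈ Icc (0 : ℝ) 1, |f t| ≤ F) (hT : T ⊆ Icc 0 1) (hf' : ∀ x ∈ T, |f' x| ≤ M)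
    (hf'' : ∀ x ∈ T, |f'' x| ≤ M)
    (h_exp : HasUniformSecondOrderExpansionOn f f' f'' T (Icc 0 1)) :
    TendstoUniformlyOn (fun (n : ℕ) x => (n : ℝ) * (DM1 a0 a1 n f x - f x))
      (fun x => (1 - 2 * x) * (2 * l1 + 3 * l0) * f' x
        + x * (1 - x) * (2 * l0 + l1) * f'' x) atTop T := by
  have h_sum : 2 * l0 + l1 = 1 := by
    refine tendsto_nhds_unique ((hl0.const_mul 2).add hl1) ?_
    simp only [hA, tendsto_const_nhds]
  have h_kernel := (isVoronovskajaKernel_modifiedDurrmeyerKernel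
    ((tendsto_add_atTop_iff_nat 1).2 hl0) fun m => hA (m + 1)).mono hT
  have h_succ : TendstoUniformlyOn
      (fun (m : ℕ) x => ((m + 1 : ℕ) : ℝ) * (DM1 a0 a1 (m + 1) f x - f x)) _ atTop T :=
    (h_kernel.tendstoUniformlyOn_voronovskaja zero_le_one hT hf hF hf' hf'' h_exp).congr
      (.of_forall fun m x _ => by simp only [DM1_succ_eq_integral a0 a1 m hf, Nat.cast_add_one])
  have h_shift : TendstoUniformlyOn (fun (n : ℕ) x => (n : ℝ) * (DM1 a0 a1 n f x - f x)) _
      atTop T := fun u hu => by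
    rw [← map_add_atTop_eq_nat 1]
    exact h_succ u hu
  refine h_shift.congr_right fun x _ => ?_
  simp only [eq_sub_of_add_eq' h_sum]
  ring

end DM1

theorem DM1_voronovskaja_nonpositive_case_general (a0 a1 : ℕ → ℝ) (l0 l1 : ℝ)
    (hl0 : Tendsto a0 atTop (𝓝 l0)) (hl1 : Tendsto a1 atTop (𝓝 l1))
    (hA : ∀ n, 2 * a0 n + a1 n = 1) (f f' f'' : ℝ → ℝ)
    (hf : IntervalIntegrable f MeasureTheory.volume 0 1)
    (hF : ∃ F, ∀ t ∈ Set.Icc (0 : ℝ) 1, |f t| ≤ F) :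
    (∀ x ∈ Set.Icc (0 : ℝ) 1,
      (∀ᶠ y in 𝓝[Set.Icc 0 1] x, HasDerivWithinAt f (f' y) (Set.Icc 0 1) y) →
      HasDerivWithinAt f' (f'' x) (Set.Icc 0 1) x →
      Tendsto (fun (n : ℕ) => (n : ℝ) * (DM1 a0 a1 n f x - f x)) atTop
        (𝓝 ((1 - 2 * x) * (2 * l1 + 3 * l0) * f' x
          + x * (1 - x) * (2 * l0 + l1) * f'' x))) ∧
    ((∀ x ∈ Set.Icc (0 : ℝ) 1, HasDerivWithinAt f (f' x) (Set.Icc 0 1) x) →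
      (∀ x ∈ Set.Icc (0 : ℝ) 1, HasDerivWithinAt f' (f'' x) (Set.Icc 0 1) x) →
      ContinuousOn f'' (Set.Icc 0 1) →
      TendstoUniformlyOn (fun (n : ℕ) x => (n : ℝ) * (DM1 a0 a1 n f x - f x))
        (fun x => (1 - 2 * x) * (2 * l1 + 3 * l0) * f' x
          + x * (1 - x) * (2 * l0 + l1) * f'' x) atTop (Set.Icc 0 1)) := by
  obtain ⟨F, hF⟩ := hF
  constructor
  · intro x hx h_deriv h_deriv'
    exact tendstoUniformlyOn_singleton_iff_tendsto.1
      (tendstoUniformlyOn_DM1_of_hasUniformSecondOrderExpansionOn hl0 hl1 hA hf hF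
        (Set.singleton_subset_iff.2 hx) (forall_eq.2 (le_max_left |f' x| |f'' x|))
        (forall_eq.2 (le_max_right |f' x| |f'' x|))
        (hasUniformSecondOrderExpansionOn_singleton (convex_Icc 0 1) hx h_deriv h_deriv'))
  · intro h_deriv h_deriv' hf''
    obtain ⟨M₁, hM₁⟩ := isCompact_Icc.exists_bound_of_continuousOn
      (HasDerivWithinAt.continuousOn h_deriv')
    obtain ⟨M₂, hM₂⟩ := isCompact_Icc.exists_bound_of_continuousOn hf''
    exact tendstoUniformlyOn_DM1_of_hasUniformSecondOrderExpansionOn hl0 hl1 hA hf hF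
      Set.Subset.rfl (fun x hx => (hM₁ x hx).trans (le_max_left M₁ M₂))
      (fun x hx => (hM₂ x hx).trans (le_max_right M₁ M₂))
      (hasUniformSecondOrderExpansionOn_of_continuousOn (convex_Icc 0 1) isCompact_Icc
        h_deriv h_deriv' hf'')

theorem DM1_voronovskaja_nonpositive_case (a0 a1 : ℕ → ℝ) (l0 l1 : ℝ)
    (hl0 : Tendsto a0 atTop (𝓝 l0)) (hl1 : Tendsto a1 atTop (𝓝 l1))
    (hA : ∀ n, 2 * a0 n + a1 n = 1)
    (hY2 : ∀ n, a0 n < 0 ∨ a1 n + a0 n < 0)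
    (f f' f'' : ℝ → ℝ)
    (hf : ContinuousOn f (Set.Icc 0 1))
    (hf' : ∀ y ∈ Set.Icc (0:ℝ) 1, HasDerivWithinAt f (f' y) (Set.Icc 0 1) y) :
    (∀ x ∈ Set.Icc (0:ℝ) 1, HasDerivWithinAt f' (f'' x) (Set.Icc 0 1) x →
      Tendsto (fun (n : ℕ) => (n : ℝ) * (DM1 a0 a1 n f x - f x)) atTop
        (𝓝 ((1 - 2 * x) * (2 * l1 + 3 * l0) * f' x
          + x * (1 - x) * (2 * l0 + l1) * f'' x))) ∧
    ((∀ x ∈ Set.Icc (0:ℝ) 1, HasDerivWithinAt f' (f'' x) (Set.Icc 0 1) x) →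
      ContinuousOn f'' (Set.Icc 0 1) →
      TendstoUniformlyOn (fun (n : ℕ) x => (n : ℝ) * (DM1 a0 a1 n f x - f x))
        (fun x => (1 - 2 * x) * (2 * l1 + 3 * l0) * f' x
          + x * (1 - x) * (2 * l0 + l1) * f'' x) atTop (Set.Icc 0 1)) := by
  have h_gen := DM1_voronovskaja_nonpositive_case_general a0 a1 l0 l1 hl0 hl1 hA f f' f''
    (hf.intervalIntegrable_of_Icc zero_le_one) (isCompact_Icc.exists_bound_of_continuousOn hf)
  exact ⟨fun x hx => h_gen.1 x hx (eventually_mem_nhdsWithin.mono hf'), h_gen.2 hf'⟩
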